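/- Let W be a word of length n ≥ 2 over a type α which is primitive, and let U be a word with |U| ≥ n − 1. If U occurs in the bi-infinite periodic extension W̃ of W at two offsets r₁ and r₂ with r₁ not congruent to r₂ modulo n, then a contradiction follows; equivalently, any word occurring at two offsets of W̃ that are not congruent modulo n has length at most n − 2. -/

import Mathlib

/-- `wordPow C k` is the concatenation of `k` copies of the word `C`. -/
def wordPow {α : Type*} (C : List α) (k : ℕ) : List α := (List.replicate k C).flatten

/-- `OccursAt W U r` says that the word `U` occurs at offset `r` in the bi-infinite
periodic extension `W̃` of `W`, where `W̃ i = W[i mod |W|]`. -/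
def OccursAt {α : Type*} (W U : List α) (r : ℤ) : Prop :=
  ∀ i : ℕ, i < U.length → W[((r + i) % (W.length : ℤ)).toNat]? = U[i]?

/-!
Two occurrences of a word of length at least `n - 1` at offsets differing by `d` say that
translation by `d` on `ℤ/n` preserves `W̃` except possibly at one residue `a`. The orbit of `a`
under the translation returns to `a`, and `W̃` is constant along `a + d, a + 2d, …, a`, so the
exception does not occur and `d` is a period of `W̃`. Then `gcd(d, n)` is also a period; if `d` is
nonzero modulo `n`, it is a proper divisor of `n`, so `W` is a proper power.
-/

section Periodicity

open Function

variable {ι β : Type*}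

theorem apply_eq_of_mem_periodicPts {f : ι → β} {σ : ι → ι} {a : ι} (ha : a ∈ periodicPts σ)
    (hf : ∀ x, x ≠ a → f (σ x) = f x) : f (σ a) = f a := by
  have orbit_const (k : ℕ) : f (σ^[k + 1] a) = f (σ a) := by
    induction k with
    | zero => rfl
    | succ k ih =>
      rw [iterate_succ_apply']
      by_cases hk : σ^[k + 1] a = a
      · rw [hk]
      · rw [hf _ hk, ih]
  obtain ⟨k, hk, hka⟩ := ha
  obtain ⟨k, rfl⟩ := Nat.exists_eq_add_one.mpr hk
  rw [← orbit_const k, hka.eq]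

theorem periodic_of_forall_ne {G : Type*} [AddGroup G] [Finite G] {f : G → β} {d a : G}
    (hf : ∀ x, x ≠ a → f (x + d) = f x) : Periodic f d := by
  intro x
  by_cases hx : x = a
  · rw [hx]
    exact apply_eq_of_mem_periodicPts ((add_left_injective d).mem_periodicPts a) hf
  · exact hf x hx

variable {n : ℕ} [NeZero n] {f : ZMod n → β}

theorem periodic_sub_of_forall_add_one_lt {a b : ZMod n}
    (hf : ∀ i : ℕ, i + 1 < n → f (a + i) = f (b + i)) : Periodic f (b - a) := by
  refine periodic_of_forall_ne (a := a - 1) fun x hx => ?_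
  obtain ⟨i, hi, rfl⟩ : ∃ i < n, x = a + (i : ZMod n) :=
    ⟨(x - a).val, ZMod.val_lt _, by simp⟩
  have hi_ne : i + 1 ≠ n := by
    intro h
    have hcast : (i : ZMod n) + 1 = 0 := by
      rw [← Nat.cast_add_one, h, ZMod.natCast_self]
    exact hx (by rw [eq_neg_of_add_eq_zero_left hcast, sub_eq_add_neg])
  rw [hf i (by omega)]
  congr 1
  ring

theorem periodic_gcd_val {d : ZMod n} (hd : Periodic f d) :
    Periodic f (Nat.gcd d.val n : ZMod n) := by
  have hbezout : (Nat.gcd d.val n : ZMod n) = (Nat.gcdA d.val n : ZMod n) * d := by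
    have h := congrArg (Int.cast (R := ZMod n)) (Nat.gcd_eq_gcd_ab d.val n)
    push_cast at h
    simpa [mul_comm] using h
  rw [hbezout]
  exact hd.int_mul _

end Periodicity

section Words

open Function

variable {α : Type*}

theorem length_wordPow (C : List α) (k : ℕ) : (wordPow C k).length = k * C.length := by
  simp [wordPow]

theorem wordPow_succ (C : List α) (k : ℕ) : wordPow C (k + 1) = C ++ wordPow C k := by
  simp [wordPow, List.replicate_succ]

theorem getElem?_wordPow (C : List α) {k i : ℕ} (hi : i < k * C.length) :
    (wordPow C k)[i]? = C[i % C.length]? := by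
  induction k generalizing i with
  | zero => simp at hi
  | succ k ih =>
    rw [wordPow_succ]
    rcases lt_or_ge i C.length with h | h
    · rw [List.getElem?_append_left h, Nat.mod_eq_of_lt h]
    · rw [Nat.succ_mul] at hi
      rw [List.getElem?_append_right h, ih (by omega), Nat.mod_eq_sub_mod h]

/-- The bi-infinite periodic extension `W̃`, as a function of the residue of the position modulo
`|W|`. The values are in `Option α` because `W` may be empty, in which case `ZMod 0 = ℤ` and every
value is `none`. -/
def periodicExtension (W : List α) (i : ZMod W.length) : Option α :=
  W[i.val]?

theorem periodicExtension_natCast {W : List α} {i : ℕ} (hi : i < W.length) :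
    periodicExtension W i = W[i]? := by
  rw [periodicExtension, ZMod.val_cast_of_lt hi]

theorem periodicExtension_intCast (W : List α) [NeZero W.length] (r : ℤ) :
    periodicExtension W r = W[(r % (W.length : ℤ)).toNat]? := by
  rw [periodicExtension, ← ZMod.val_intCast, Int.toNat_natCast]

theorem OccursAt.periodicExtension_eq {W U : List α} [NeZero W.length] {r : ℤ}
    (h : OccursAt W U r) {i : ℕ} (hi : i < U.length) :
    periodicExtension W (r + i) = U[i]? := by
  rw [← h i hi, ← periodicExtension_intCast]
  push_cast
  rfl

theorem OccursAt.periodic_sub {W U : List α} [NeZero W.length] {r₁ r₂ : ℤ}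
    (h₁ : OccursAt W U r₁) (h₂ : OccursAt W U r₂) (hU : W.length ≤ U.length + 1) :
    Periodic (periodicExtension W) (r₂ - r₁) :=
  periodic_sub_of_forall_add_one_lt fun i hi =>
    (h₁.periodicExtension_eq (by omega)).trans (h₂.periodicExtension_eq (by omega)).symm

theorem getElem?_mod_of_periodic {W : List α} {g i : ℕ}
    (hper : Periodic (periodicExtension W) g) (hi : i < W.length) : W[i % g]? = W[i]? := by
  rw [← periodicExtension_natCast hi,
    ← periodicExtension_natCast ((Nat.mod_le i g).trans_lt hi), ← hper.nat_mul (i / g)]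
  congr 1
  exact_mod_cast congrArg (Nat.cast (R := ZMod W.length)) (Nat.mod_add_div' i g)

theorem eq_wordPow_take_of_periodic {W : List α} {g m : ℕ} (hlen : W.length = m * g)
    (hper : Periodic (periodicExtension W) g) : W = wordPow (W.take g) m := by
  refine List.ext_getElem? fun i => ?_
  rcases lt_or_ge i W.length with hi | hi
  · obtain ⟨hm, hg⟩ : 0 < m ∧ 0 < g :=
      CanonicallyOrderedAdd.mul_pos.mp (hlen ▸ Nat.zero_lt_of_lt hi)
    have htake : (W.take g).length = g :=
      List.length_take_of_le (hlen ▸ Nat.le_mul_of_pos_left g hm)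
    rw [getElem?_wordPow _ (by rwa [htake, ← hlen]), htake,
      List.getElem?_take_of_lt (Nat.mod_lt i hg), getElem?_mod_of_periodic hper hi]
  · have hpow : (wordPow (W.take g) m).length ≤ W.length := by
      rw [length_wordPow, hlen]
      exact Nat.mul_le_mul_left m (List.length_take_le g W)
    rw [List.getElem?_eq_none hi, List.getElem?_eq_none (hpow.trans hi)]

theorem exists_eq_wordPow_of_periodic {W : List α} [NeZero W.length] {d : ZMod W.length}
    (hd : d ≠ 0) (hper : Periodic (periodicExtension W) d) :
    ∃ (C : List α) (m : ℕ), 2 ≤ m ∧ W = wordPow C m := by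
  have hg_lt : Nat.gcd d.val W.length < W.length :=
    (Nat.gcd_le_left _ (ZMod.val_pos.mpr hd)).trans_lt (ZMod.val_lt d)
  obtain ⟨m, hm⟩ := exists_eq_mul_left_of_dvd (Nat.gcd_dvd_right d.val W.length)
  have hm_two : 2 ≤ m := by
    by_contra! h
    interval_cases m <;> omega
  exact ⟨_, m, hm_two, eq_wordPow_take_of_periodic hm (periodic_gcd_val hper)⟩

end Words

/-- If `W` is a primitive word of length `n ≥ 2` and `U` occurs in the bi-infinite
periodic extension of `W` at two offsets that are not congruent modulo `n`, then
`|U| ≤ n - 2` (equivalently, `|U| ≥ n - 1` gives a contradiction). -/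
theorem statement5 {α : Type*} (W U : List α) (n : ℕ) (hn : 2 ≤ n) (hW : W.length = n)
    (hprim : ¬ ∃ (C : List α) (m : ℕ), 2 ≤ m ∧ W = wordPow C m)
    (r₁ r₂ : ℤ) (h1 : OccursAt W U r₁) (h2 : OccursAt W U r₂)
    (hmod : ¬ r₁ ≡ r₂ [ZMOD (n : ℤ)]) :
    U.length ≤ n - 2 := by
  subst hW
  have : NeZero W.length := ⟨by omega⟩
  by_contra! hU
  have hne : (r₂ - r₁ : ZMod W.length) ≠ 0 := fun h =>
    hmod ((ZMod.intCast_eq_intCast_iff r₁ r₂ W.length).mp (sub_eq_zero.mp h).symm)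
  exact hprim (exists_eq_wordPow_of_periodic hne (h1.periodic_sub h2 (by omega)))
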